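/- Let q be a prime power with q ≥ 3, F a finite field with q elements, and ℓ a one-dimensional linear subspace of F². Define H_ℓ = {M ∈ GL(2,F) : for all v ∈ F², M v − v ∈ ℓ}. Then H_ℓ is a subgroup of GL(2,F) of order q(q−1); H_ℓ is an intersecting set (any two of its elements agree on some nonzero vector of F²); and H_ℓ is not a canonical intersecting set, i.e., there are no nonzero x, y ∈ F² with H_ℓ = {g ∈ GL(2,F) : g x = y}. In particular GL(2,F) does not have the strict-EKR property. -/

import Mathlib

/-!
Write `ℓ = F w`. A matrix `M` satisfies `M v - v ∈ ℓ` for all `v` exactly when it is a rank-one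
perturbation `M = 1 + w uᵀ` of the identity, and `det (1 + w uᵀ) = 1 + u · w`. Hence `H_ℓ`
corresponds to the covectors `u` outside the affine hyperplane `u · w = -1`, which gives its order.
The difference of two elements of `H_ℓ` maps everything into the proper subspace `ℓ`, so it is
singular, and the two elements agree on a nonzero vector. Finally, `1 ∈ H_ℓ`, so if `H_ℓ` were
`{g | g x = y}` it would fix `x`. But choose a covector `u` with `u · x ≠ 0` and a scalar
`c ≠ 0, 1`: neither `1 + w uᵀ` nor `1 + c w uᵀ` fixes `x`, and at least one of them is invertible.
-/

open Matrix

section RankOnePerturbation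

variable {n R : Type*} [Fintype n] [DecidableEq n] [CommRing R]

/-- The subgroup of `GL n R` acting trivially on the quotient of `n → R` by `W`; this is `H_ℓ` when
`W` is a line `ℓ`. -/
def quotientFixingSubgroup (W : Submodule R (n → R)) : Subgroup (GL n R) where
  carrier := {M | ∀ v : n → R, (M : Matrix n n R) *ᵥ v - v ∈ W}
  mul_mem' {g h} hg hh v := by
    rw [Units.val_mul, ← mulVec_mulVec, ← sub_add_sub_cancel _ ((h : Matrix n n R) *ᵥ v)]
    exact W.add_mem (hg _) (hh v)
  one_mem' v := by simp
  inv_mem' {g} hg v := by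
    have hgv := W.neg_mem (hg ((g⁻¹ : GL n R).val *ᵥ v))
    rwa [mulVec_mulVec, Units.mul_inv, one_mulVec, neg_sub] at hgv

/-- Intersecting sets of matrices, for the action of `GL n R` on the nonzero vectors. -/
def IsIntersecting (S : Set (GL n R)) : Prop :=
  ∀ g ∈ S, ∀ h ∈ S, ∃ v : n → R, v ≠ 0 ∧ (g : Matrix n n R) *ᵥ v = (h : Matrix n n R) *ᵥ v

/-- The canonical intersecting set `S_{x,y}`, formed for arbitrary `x` and `y`; it is intersecting
when `x ≠ 0`. -/
def canonicalSet (x y : n → R) : Set (GL n R) :=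
  {g | (g : Matrix n n R) *ᵥ x = y}

lemma one_add_vecMulVec_mulVec (w u v : n → R) :
    (1 + vecMulVec w u) *ᵥ v = v + (u ⬝ᵥ v) • w := by
  rw [add_mulVec, one_mulVec, vecMulVec_mulVec, op_smul_eq_smul]

lemma isUnit_one_add_vecMulVec_iff {w u : n → R} :
    IsUnit (1 + vecMulVec w u) ↔ IsUnit (1 + u ⬝ᵥ w) := by
  rw [isUnit_iff_isUnit_det, vecMulVec_eq Unit, det_one_add_replicateCol_mul_replicateRow]

lemma mem_quotientFixingSubgroup_of_val_eq_one_add_vecMulVec {W : Submodule R (n → R)}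
    {w u : n → R} (hw : w ∈ W) {M : GL n R} (hM : (M : Matrix n n R) = 1 + vecMulVec w u) :
    M ∈ quotientFixingSubgroup W := by
  intro v
  rw [hM, one_add_vecMulVec_mulVec, add_sub_cancel_left]
  exact W.smul_mem _ hw

lemma mem_quotientFixingSubgroup_span_singleton {w : n → R} {M : GL n R} :
    M ∈ quotientFixingSubgroup (R ∙ w) ↔ ∃ u, 1 + vecMulVec w u = (M : Matrix n n R) := by
  refine ⟨fun hM ↦ ?_, fun ⟨u, hu⟩ ↦ mem_quotientFixingSubgroup_of_val_eq_one_add_vecMulVec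
    (Submodule.mem_span_singleton_self w) hu.symm⟩
  choose u hu using fun j ↦ Submodule.mem_span_singleton.1 (hM (Pi.single j 1))
  refine ⟨u, ext_of_mulVec_single fun j ↦ ?_⟩
  rw [one_add_vecMulVec_mulVec, dotProduct_single_one, hu, add_sub_cancel]

lemma image_val_quotientFixingSubgroup_span_singleton (w : n → R) :
    Units.val '' (quotientFixingSubgroup (R ∙ w) : Set (GL n R)) =
      (fun u ↦ 1 + vecMulVec w u) '' {u | IsUnit (1 + u ⬝ᵥ w)} := by
  ext A
  constructor
  · rintro ⟨M, hM, rfl⟩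
    obtain ⟨u, hu⟩ := mem_quotientFixingSubgroup_span_singleton.1 hM
    exact ⟨u, isUnit_one_add_vecMulVec_iff.1 (hu ▸ M.isUnit), hu⟩
  · rintro ⟨u, hu, rfl⟩
    obtain ⟨M, hM⟩ := isUnit_one_add_vecMulVec_iff.2 hu
    exact ⟨M, mem_quotientFixingSubgroup_span_singleton.2 ⟨u, hM.symm⟩, hM⟩

end RankOnePerturbation

section Order

variable {F : Type*} [Field F] [Finite F]

lemma ncard_setOf_dual_ne {V : Type*} [AddCommGroup V] [Module F V]
    [FiniteDimensional F V] {f : Module.Dual F V} (hf : f ≠ 0) (c : F) :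
    {v | f v ≠ c}.ncard = Nat.card F ^ (Module.finrank F V - 1) * (Nat.card F - 1) := by
  have : Finite V := Module.finite_of_finite F
  have card_fiber : {v | f v = c}.ncard = Nat.card F ^ (Module.finrank F V - 1) := by
    have hsurj : Function.Surjective f.toAddMonoidHom := LinearMap.surjective hf
    rw [← Module.Dual.finrank_ker_add_one_of_ne_zero hf, Nat.add_sub_cancel,
      ← Module.natCard_eq_pow_finrank]
    exact Nat.card_congr (AddMonoidHom.fiberEquivKerOfSurjective hsurj c)
  have card_eq : Nat.card V = Nat.card F ^ (Module.finrank F V - 1) * Nat.card F := by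
    rw [Module.natCard_eq_pow_finrank (K := F), ← pow_succ,
      ← Module.Dual.finrank_ker_add_one_of_ne_zero hf, Nat.add_sub_cancel]
  rw [← Set.compl_ofPred, Set.ncard_compl, card_fiber, card_eq, Nat.mul_sub_one]

lemma vecMulVec_right_injective {m n R : Type*} [Mul R] [Zero R] [IsLeftCancelMulZero R]
    {w : m → R} (hw : w ≠ 0) : Function.Injective (vecMulVec w : (n → R) → Matrix m n R) := by
  intro u u' h
  obtain ⟨i, hi⟩ := Function.ne_iff.1 hw
  exact funext fun j ↦ mul_left_cancel₀ hi (congrFun₂ h i j)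

theorem card_quotientFixingSubgroup_span_singleton {n : Type*} [Fintype n] [DecidableEq n]
    {w : n → F} (hw : w ≠ 0) :
    Nat.card (quotientFixingSubgroup (F ∙ w)) =
      Nat.card F ^ (Fintype.card n - 1) * (Nat.card F - 1) := by
  have hset : {u | IsUnit (1 + u ⬝ᵥ w)} = {u | dotProductEquiv F n w u ≠ -1} := by
    ext u
    simp [dotProduct_comm w, add_comm (1 : F), eq_neg_iff_add_eq_zero]
  have hdual : dotProductEquiv F n w ≠ 0 := (dotProductEquiv F n).map_ne_zero_iff.2 hw
  have hinj : Function.Injective fun u : n → F ↦ 1 + vecMulVec w u :=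
    (add_right_injective 1).comp (vecMulVec_right_injective hw)
  calc Nat.card (quotientFixingSubgroup (F ∙ w))
      = (Units.val '' (quotientFixingSubgroup (F ∙ w) : Set (GL n F))).ncard :=
        (Set.ncard_image_of_injective _ Units.val_injective).symm
    _ = {u | IsUnit (1 + u ⬝ᵥ w)}.ncard := by
        rw [image_val_quotientFixingSubgroup_span_singleton,
          Set.ncard_image_of_injective _ hinj]
    _ = Nat.card F ^ (Fintype.card n - 1) * (Nat.card F - 1) := by
        rw [hset, ncard_setOf_dual_ne hdual, Module.finrank_pi]

end Order

section Intersecting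

variable {n F : Type*} [Fintype n] [Field F]

lemma exists_isUnit_one_add_dotProduct [Nontrivial Fˣ] (w : n → F) {x : n → F} (hx : x ≠ 0) :
    ∃ u : n → F, IsUnit (1 + u ⬝ᵥ w) ∧ u ⬝ᵥ x ≠ 0 := by
  obtain ⟨u, hu⟩ : ∃ u, x ⬝ᵥ u ≠ 0 := by
    simpa using mt (dotProduct_eq_zero x) hx
  rw [dotProduct_comm] at hu
  by_cases huw : u ⬝ᵥ w = -1
  · obtain ⟨c, hc⟩ := exists_ne (1 : Fˣ)
    refine ⟨(c : F) • u, .mk0 _ fun h ↦ hc (Units.ext ?_), ?_⟩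
    · rw [smul_dotProduct, huw, smul_eq_mul] at h
      rw [Units.val_one]
      linear_combination -h
    · rw [smul_dotProduct, smul_eq_mul]
      exact mul_ne_zero c.ne_zero hu
  · exact ⟨u, .mk0 _ fun h ↦ huw (eq_neg_of_add_eq_zero_right h), hu⟩

variable [DecidableEq n] {W : Submodule F (n → F)}

theorem isIntersecting_quotientFixingSubgroup (hW : W ≠ ⊤) :
    IsIntersecting (quotientFixingSubgroup W : Set (GL n F)) := by
  intro g hg h hh
  have hrange (v : n → F) : ((g : Matrix n n F) - (h : Matrix n n F)) *ᵥ v ∈ W := by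
    rw [sub_mulVec, ← sub_sub_sub_cancel_right _ _ v]
    exact W.sub_mem (hg v) (hh v)
  have hdet : ((g : Matrix n n F) - (h : Matrix n n F)).det = 0 := by
    by_contra hdet
    have hsurj := mulVec_surjective_iff_isUnit.2 ((isUnit_iff_isUnit_det _).2 (.mk0 _ hdet))
    exact hW (Submodule.eq_top_iff'.2 (hsurj.forall.2 hrange))
  obtain ⟨v, hv, hgh⟩ := exists_mulVec_eq_zero_iff.2 hdet
  exact ⟨v, hv, sub_eq_zero.1 (by rw [← sub_mulVec, hgh])⟩

lemma exists_mem_quotientFixingSubgroup_mulVec_ne [Nontrivial Fˣ] (hW : W ≠ ⊥) {x : n → F}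
    (hx : x ≠ 0) : ∃ g ∈ quotientFixingSubgroup W, (g : Matrix n n F) *ᵥ x ≠ x := by
  obtain ⟨w, hwW, hw⟩ := W.exists_mem_ne_zero_of_ne_bot hW
  obtain ⟨u, huw, hux⟩ := exists_isUnit_one_add_dotProduct w hx
  obtain ⟨g, hg⟩ := isUnit_one_add_vecMulVec_iff.2 huw
  refine ⟨g, mem_quotientFixingSubgroup_of_val_eq_one_add_vecMulVec hwW hg, ?_⟩
  rw [hg, one_add_vecMulVec_mulVec, Ne, add_eq_left]
  exact smul_ne_zero hux hw

theorem quotientFixingSubgroup_ne_canonicalSet [Nontrivial Fˣ] (hW : W ≠ ⊥) {x : n → F}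
    (hx : x ≠ 0) (y : n → F) :
    (quotientFixingSubgroup W : Set (GL n F)) ≠ canonicalSet x y := by
  intro h
  have hfix (g : GL n F) (hg : g ∈ quotientFixingSubgroup W) : (g : Matrix n n F) *ᵥ x = y :=
    h.subset hg
  have hxy : x = y := by simpa using hfix 1 (one_mem _)
  obtain ⟨g, hg, hgx⟩ := exists_mem_quotientFixingSubgroup_mulVec_ne hW hx
  exact hgx ((hfix g hg).trans hxy.symm)

end Intersecting

theorem gl2_not_strict_ekr_general {n F : Type*} [Fintype n] [DecidableEq n] [Nontrivial n]
    [Field F] [Finite F] (hF : 3 ≤ Nat.card F)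
    {ℓ : Submodule F (n → F)} (hℓ : Module.finrank F ℓ = 1) :
    Nat.card (quotientFixingSubgroup ℓ) = Nat.card F ^ (Fintype.card n - 1) * (Nat.card F - 1) ∧
    IsIntersecting (quotientFixingSubgroup ℓ : Set (GL n F)) ∧
    ∀ x y : n → F, x ≠ 0 → (quotientFixingSubgroup ℓ : Set (GL n F)) ≠ canonicalSet x y := by
  have : Nontrivial Fˣ := Finite.one_lt_card_iff_nontrivial.1 (by rw [Nat.card_units]; omega)
  have hatom : IsAtom ℓ := Submodule.isAtom_iff_finrank_eq_one.2 hℓ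
  have hproper : ℓ ≠ ⊤ := by
    rintro rfl
    rw [finrank_top, Module.finrank_pi] at hℓ
    exact Fintype.one_lt_card.ne' hℓ
  refine ⟨?_, isIntersecting_quotientFixingSubgroup hproper,
    fun x y hx ↦ quotientFixingSubgroup_ne_canonicalSet hatom.1 hx y⟩
  obtain ⟨w, hw, rfl⟩ := (atom_iff_nonzero_span ℓ).1 hatom
  exact card_quotientFixingSubgroup_span_singleton hw

/-- **GL(2,q) does not have the strict-EKR property.**  For a line `ℓ ≤ F²`, the set
`H_ℓ = {M ∈ GL(2,F) : ∀ v, Mv - v ∈ ℓ}` is a subgroup of order `q(q-1)`, it is an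
intersecting set, and it is not a canonical intersecting set. -/
theorem gl2_not_strict_ekr (q : ℕ) (hq : IsPrimePow q) (hq3 : 3 ≤ q)
    (F : Type*) [Field F] [Fintype F] (hF : Fintype.card F = q)
    (ℓ : Submodule F (Fin 2 → F)) (hℓ : Module.finrank F ℓ = 1) :
    (∃ H : Subgroup (GL (Fin 2) F), (H : Set (GL (Fin 2) F)) =
      {M : GL (Fin 2) F | ∀ v : Fin 2 → F,
        (M : Matrix (Fin 2) (Fin 2) F).mulVec v - v ∈ ℓ}) ∧
    {M : GL (Fin 2) F | ∀ v : Fin 2 → F,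
      (M : Matrix (Fin 2) (Fin 2) F).mulVec v - v ∈ ℓ}.ncard = q * (q - 1) ∧
    (∀ g ∈ {M : GL (Fin 2) F | ∀ v : Fin 2 → F,
        (M : Matrix (Fin 2) (Fin 2) F).mulVec v - v ∈ ℓ},
      ∀ h ∈ {M : GL (Fin 2) F | ∀ v : Fin 2 → F,
        (M : Matrix (Fin 2) (Fin 2) F).mulVec v - v ∈ ℓ},
        ∃ v : Fin 2 → F, v ≠ 0 ∧
          (g : Matrix (Fin 2) (Fin 2) F).mulVec v = (h : Matrix (Fin 2) (Fin 2) F).mulVec v) ∧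
    ¬ ∃ x y : Fin 2 → F, x ≠ 0 ∧ y ≠ 0 ∧
      {M : GL (Fin 2) F | ∀ v : Fin 2 → F,
        (M : Matrix (Fin 2) (Fin 2) F).mulVec v - v ∈ ℓ} =
      {g : GL (Fin 2) F | (g : Matrix (Fin 2) (Fin 2) F).mulVec x = y} := by
  obtain ⟨hcard, hint, hcan⟩ := gl2_not_strict_ekr_general (by simpa [hF] using hq3) hℓ
  exact ⟨⟨quotientFixingSubgroup ℓ, rfl⟩, hcard.trans (by simp [hF]), hint,
    fun ⟨x, y, hx, _, h⟩ ↦ hcan x y hx h⟩
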